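/- arXiv:2012.15046 — 10 statements merged into one kernel-verified Lean document; each statement's English description precedes it below -/
import Mathlib

section
/- Suppose f ≡ 0 on X, and c ∈ ℝ^m is a nonzero vector such that min_{x∈X} cᵀx < max_{x∈X} cᵀx (in particular X has at least two extreme points). Then for every selection x* of minimizers, the true loss function d ↦ L(d,c) = cᵀx*(d) − min_{x∈X} cᵀx is not a convex function on ℝ^m. -/
open scoped RealInnerProductSpace

/-- With `f ≡ 0` on `X`, a nonzero `c` with a genuine gap between the
minimum and maximum of `x ↦ ⟪c, x⟫` over `X`, the true loss `d ↦ L(d,c)` is not convex,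
for every selection `xs` of minimizers. -/
theorem statement0 {m : ℕ} (X : Set (EuclideanSpace ℝ (Fin m)))
    (hXne : X.Nonempty) (hXconv : Convex ℝ X) (hXcomp : IsCompact X)
    (f : EuclideanSpace ℝ (Fin m) → ℝ)
    (hfconv : ConvexOn ℝ X f) (hfcont : ContinuousOn f X)
    (hf0 : ∀ x ∈ X, f x = 0)
    (xs : EuclideanSpace ℝ (Fin m) → EuclideanSpace ℝ (Fin m))
    (hxsmem : ∀ d, xs d ∈ X)
    (hxsmin : ∀ d, ∀ x ∈ X, f (xs d) + ⟪d, xs d⟫ ≤ f x + ⟪d, x⟫)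
    (c : EuclideanSpace ℝ (Fin m)) (hc : c ≠ 0)
    (hgap : sInf ((fun x => ⟪c, x⟫) '' X) < sSup ((fun x => ⟪c, x⟫) '' X)) :
    ¬ ConvexOn ℝ Set.univ
      (fun d => f (xs d) + ⟪c, xs d⟫ - sInf ((fun x => f x + ⟪c, x⟫) '' X)) := by
  intro h
  have h1 : ∀ x ∈ X, ⟪c, xs c⟫ ≤ ⟪c, x⟫ := by
    intro x hx
    have := hxsmin c x hx
    rw [hf0 _ hx, hf0 _ (hxsmem c)] at this
    linarith
  have h2 : ∀ x ∈ X, ⟪c, x⟫ ≤ ⟪c, xs (-c)⟫ := by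
    intro x hx
    have := hxsmin (-c) x hx
    rw [hf0 _ hx, hf0 _ (hxsmem (-c)), inner_neg_left, inner_neg_left] at this
    linarith
  have h3 : ⟪c, xs c⟫ ≤ sInf ((fun x => ⟪c, x⟫) '' X) := by
    apply le_csInf (hXne.image _)
    rintro _ ⟨x, hx, rfl⟩
    exact h1 x hx
  have h4 : sSup ((fun x => ⟪c, x⟫) '' X) ≤ ⟪c, xs (-c)⟫ := by
    apply csSup_le (hXne.image _)
    rintro _ ⟨x, hx, rfl⟩
    exact h2 x hx
  have h5 := h.2 (Set.mem_univ c) (Set.mem_univ ((-3 : ℝ) • c))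
    (by norm_num : (0 : ℝ) ≤ 1 / 2) (by norm_num : (0 : ℝ) ≤ 1 / 2) (by norm_num)
  have h6 : (1 / 2 : ℝ) • c + (1 / 2 : ℝ) • ((-3 : ℝ) • c) = -c := by
    module
  rw [h6] at h5
  simp only [hf0 _ (hxsmem _), smul_eq_mul] at h5
  have h7 := h2 _ (hxsmem ((-3 : ℝ) • c))
  linarith
end

section
/- Let B_X := max_{x,x'∈X} ‖x−x'‖₂ be the Euclidean diameter of X and fix ε > 0. Let μ be a Borel probability measure on ℝ^m with ∫‖c‖₂²dμ < ∞, and let d ∈ ℝ^m be such that ∫L(d,c)dμ(c) − inf_{d'∈ℝ^m} ∫L(d',c)dμ(c) ≥ ε. Then ∫‖d−c‖₂²dμ(c) − inf_{d'∈ℝ^m} ∫‖d'−c‖₂²dμ(c) ≥ ε²/B_X² > 0. (In other words, the uniform calibration function of the squared loss satisfies δ_{ℓ_LS}(ε) ≥ ε²/B_X².) -/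
open MeasureTheory
open scoped RealInnerProductSpace

/-- The optimality-gap (true) loss `L(d,c)`. -/
noncomputable def trueLoss {m : ℕ} (X : Set (EuclideanSpace ℝ (Fin m)))
    (f : EuclideanSpace ℝ (Fin m) → ℝ)
    (xs : EuclideanSpace ℝ (Fin m) → EuclideanSpace ℝ (Fin m))
    (d c : EuclideanSpace ℝ (Fin m)) : ℝ :=
  f (xs d) + ⟪c, xs d⟫ - sInf ((fun x => f x + ⟪c, x⟫) '' X)

/-- the squared loss is uniformly calibrated with calibration function at least
`ε² / B_X²`: if the excess expected true loss at `d` is at least `ε`, then the excess expected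
squared loss at `d` is at least `ε² / B_X² > 0`, where `B_X = diam X`. -/
theorem statement8 {m : ℕ}
    (X : Set (EuclideanSpace ℝ (Fin m)))
    (hXne : X.Nonempty) (hXconv : Convex ℝ X) (hXcomp : IsCompact X)
    (f : EuclideanSpace ℝ (Fin m) → ℝ)
    (hfconv : ConvexOn ℝ X f) (hfcont : ContinuousOn f X)
    (xs : EuclideanSpace ℝ (Fin m) → EuclideanSpace ℝ (Fin m))
    (hxsmem : ∀ d, xs d ∈ X)
    (hxsmin : ∀ d, ∀ x ∈ X, f (xs d) + ⟪d, xs d⟫ ≤ f x + ⟪d, x⟫)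
    (ε : ℝ) (hε : 0 < ε)
    (μ : Measure (EuclideanSpace ℝ (Fin m))) [IsProbabilityMeasure μ]
    (hμ : Integrable (fun c : EuclideanSpace ℝ (Fin m) => ‖c‖ ^ 2) μ)
    (d : EuclideanSpace ℝ (Fin m))
    (hd : ε ≤ (∫ c, trueLoss X f xs d c ∂μ) - (⨅ d', ∫ c, trueLoss X f xs d' c ∂μ)) :
    ε ^ 2 / (Metric.diam X) ^ 2
      ≤ (∫ c, ‖d - c‖ ^ 2 ∂μ) - (⨅ d' : EuclideanSpace ℝ (Fin m), ∫ c, ‖d' - c‖ ^ 2 ∂μ) ∧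
    0 < ε ^ 2 / (Metric.diam X) ^ 2 := by
  have hid : Integrable (fun c : EuclideanSpace ℝ (Fin m) => c) μ := by
    have h2 : MemLp (fun c : EuclideanSpace ℝ (Fin m) => c) 2 μ :=
      (memLp_two_iff_integrable_sq_norm (by fun_prop)).2 hμ
    exact h2.integrable (by norm_num)
  have hin : ∀ x : EuclideanSpace ℝ (Fin m),
      Integrable (fun c : EuclideanSpace ℝ (Fin m) => ⟪c, x⟫) μ := fun x => hid.inner_const x
  obtain ⟨b, hb⟩ : ∃ b : EuclideanSpace ℝ (Fin m), b = ∫ c, c ∂μ := ⟨_, rfl⟩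
  have hinb : ∀ x : EuclideanSpace ℝ (Fin m), ∫ c, ⟪c, x⟫ ∂μ = ⟪b, x⟫ := by
    intro x
    have := integral_inner (𝕜 := ℝ) hid x
    rw [hb, real_inner_comm, ← this]
    exact integral_congr_ae (Filter.Eventually.of_forall fun c => real_inner_comm _ _)
  have hA : ∀ e, Integrable (fun c : EuclideanSpace ℝ (Fin m) => f (xs e) + ⟪c, xs e⟫) μ :=
    fun e => (integrable_const _).add (hin _)
  have hAi : ∀ e, ∫ c, (f (xs e) + ⟪c, xs e⟫) ∂μ = f (xs e) + ⟪b, xs e⟫ := by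
    intro e
    rw [integral_add (integrable_const _) (hin _), hinb]
    simp
  have key : ε ≤ (f (xs d) + ⟪b, xs d⟫) - (f (xs b) + ⟪b, xs b⟫) := by
    by_cases hg : Integrable (fun c => sInf ((fun x => f x + ⟪c, x⟫) '' X)) μ
    · have hL : ∀ e, ∫ c, trueLoss X f xs e c ∂μ = (f (xs e) + ⟪b, xs e⟫)
          - ∫ c, sInf ((fun x => f x + ⟪c, x⟫) '' X) ∂μ := by
        intro e
        simp only [trueLoss]
        rw [integral_sub (hA e) hg, hAi]
      have hle : ∫ c, trueLoss X f xs b c ∂μ ≤ ⨅ d', ∫ c, trueLoss X f xs d' c ∂μ := by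
        apply le_ciInf
        intro e
        rw [hL, hL]
        linarith [hxsmin b (xs e) (hxsmem e)]
      rw [hL] at hle
      rw [hL d] at hd
      linarith
    · have hL : ∀ e, ∫ c, trueLoss X f xs e c ∂μ = 0 := by
        intro e
        apply integral_undef
        intro h
        apply hg
        have := (hA e).sub h
        refine this.congr (Filter.Eventually.of_forall fun c => ?_)
        simp [trueLoss]
      simp only [hL, ciInf_const] at hd
      linarith
  have hB : ε ≤ ‖d - b‖ * Metric.diam X := by
    have h1 := hxsmin d (xs b) (hxsmem b)
    have h2 : ⟪d - b, xs b - xs d⟫ ≤ ‖d - b‖ * ‖xs b - xs d‖ := real_inner_le_norm _ _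
    have h3 : ‖xs b - xs d‖ ≤ Metric.diam X := by
      rw [← dist_eq_norm]
      exact Metric.dist_le_diam_of_mem hXcomp.isBounded (hxsmem b) (hxsmem d)
    have h4 := mul_le_mul_of_nonneg_left h3 (norm_nonneg (d - b))
    rw [inner_sub_left, inner_sub_right, inner_sub_right] at h2
    linarith
  have hBpos : 0 < Metric.diam X := by
    rcases (Metric.diam_nonneg (s := X)).eq_or_lt with h | h
    · rw [← h] at hB
      linarith
    · exact h
  have hsq : ∀ e : EuclideanSpace ℝ (Fin m),
      ∫ c, ‖e - c‖ ^ 2 ∂μ = ‖e‖ ^ 2 - 2 * ⟪b, e⟫ + ∫ c, ‖c‖ ^ 2 ∂μ := by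
    intro e
    have : ∀ c : EuclideanSpace ℝ (Fin m), ‖e - c‖ ^ 2 = (‖e‖ ^ 2 - 2 * ⟪c, e⟫) + ‖c‖ ^ 2 := by
      intro c
      rw [norm_sub_sq_real, real_inner_comm]
    simp only [this]
    have hI : Integrable (fun c : EuclideanSpace ℝ (Fin m) => ‖e‖ ^ 2 - 2 * ⟪c, e⟫) μ :=
      (integrable_const _).sub ((hin e).const_mul 2)
    rw [integral_add hI hμ,
      integral_sub (integrable_const _) ((hin e).const_mul 2), integral_const_mul, hinb]
    simp
  have hinf : (⨅ d' : EuclideanSpace ℝ (Fin m), ∫ c, ‖d' - c‖ ^ 2 ∂μ) ≤ ∫ c, ‖b - c‖ ^ 2 ∂μ := by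
    apply ciInf_le
    refine ⟨0, ?_⟩
    rintro _ ⟨e, rfl⟩
    exact integral_nonneg fun c => by positivity
  refine ⟨?_, by positivity⟩
  have h5 : ε ^ 2 / Metric.diam X ^ 2 ≤ ‖d - b‖ ^ 2 := by
    rw [div_le_iff₀ (by positivity), ← mul_pow]
    exact pow_le_pow_left₀ hε.le hB 2
  rw [hsq b, real_inner_self_eq_norm_sq] at hinf
  rw [hsq d]
  rw [norm_sub_sq_real, real_inner_comm] at h5
  linarith
end

section
/- Let ψ : ℝ → [0,∞) be symmetric (ψ(r) = ψ(−r) for all r) and uniformly convex with modulus δ₀ : [0,∞) → [0,∞) nondecreasing with δ₀(0) = 0, i.e., for all α ∈ [0,1] and r, r' ∈ ℝ, αψ(r) + (1−α)ψ(r') − ψ(αr + (1−α)r') ≥ α(1−α)δ₀(|r−r'|²). Let μ be a Borel probability measure on ℝ with finite mean c̄ := ∫c dμ(c) that is symmetric about c̄ (the law of c − c̄ equals the law of c̄ − c), and assume ∫ψ(t−c)dμ(c) < ∞ for all t ∈ ℝ. Then for every t ∈ ℝ, ∫ψ(t−c)dμ(c) − ∫ψ(c̄−c)dμ(c) ≥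 (1/4)·δ₀(4(t−c̄)²); in particular c̄ minimizes t ↦ ∫ψ(t−c)dμ(c). -/
open MeasureTheory

/-- for a symmetric, uniformly convex loss `ψ` with modulus `δ₀` and a
distribution `μ` on `ℝ` symmetric about its mean `c̄`, the excess risk of any `t` is at least
`(1/4)·δ₀(4(t − c̄)²)`; in particular `c̄` minimizes `t ↦ ∫ ψ(t − c) dμ(c)`. -/
theorem statement11 (ψ : ℝ → ℝ) (hψnn : ∀ r, 0 ≤ ψ r) (hψsym : ∀ r, ψ (-r) = ψ r)
    (δ₀ : ℝ → ℝ) (hδnn : ∀ s, 0 ≤ s → 0 ≤ δ₀ s) (hδzero : δ₀ 0 = 0)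
    (hδmono : MonotoneOn δ₀ (Set.Ici 0))
    (huc : ∀ α ∈ Set.Icc (0:ℝ) 1, ∀ r r' : ℝ,
      α * (1 - α) * δ₀ (|r - r'| ^ 2)
        ≤ α * ψ r + (1 - α) * ψ r' - ψ (α * r + (1 - α) * r'))
    (μ : Measure ℝ) [IsProbabilityMeasure μ]
    (hμint : Integrable (fun c : ℝ => c) μ)
    (hsymm : μ.map (fun c => c - ∫ x, x ∂μ) = μ.map (fun c => (∫ x, x ∂μ) - c))
    (hψint : ∀ t : ℝ, Integrable (fun c => ψ (t - c)) μ) :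
    ∀ t : ℝ,
      (1 / 4) * δ₀ (4 * (t - ∫ x, x ∂μ) ^ 2)
          ≤ (∫ c, ψ (t - c) ∂μ) - ∫ c, ψ ((∫ x, x ∂μ) - c) ∂μ ∧
      (∫ c, ψ ((∫ x, x ∂μ) - c) ∂μ) ≤ ∫ c, ψ (t - c) ∂μ := by
  intro t
  set m := ∫ x, x ∂μ with hm
  have key : ∫ c, ψ (2 * m - t - c) ∂μ = ∫ c, ψ (t - c) ∂μ := by
    have h1 := (Homeomorph.subRight m).measurableEmbedding.integral_map (μ := μ)
      (fun y => ψ (t - m + y))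
    have h2 := (Homeomorph.subLeft m).measurableEmbedding.integral_map (μ := μ)
      (fun y => ψ (t - m + y))
    have e1 : (⇑(Homeomorph.subRight m) : ℝ → ℝ) = fun c => c - m := rfl
    have e2 : (⇑(Homeomorph.subLeft m) : ℝ → ℝ) = fun c => m - c := rfl
    rw [e1, hsymm] at h1
    rw [e2] at h2
    have h3 := h1.symm.trans h2
    calc ∫ c, ψ (2 * m - t - c) ∂μ = ∫ c, ψ (t - m + (c - m)) ∂μ := by
          congr 1; ext c; rw [← hψsym]; congr 1; ring
      _ = ∫ c, ψ (t - m + (m - c)) ∂μ := h3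
      _ = ∫ c, ψ (t - c) ∂μ := by
          congr 1; ext c; congr 1; ring
  have pt : ∀ c, (1 / 4) * δ₀ (4 * (t - m) ^ 2) ≤
      (1 / 2) * ψ (t - c) + (1 / 2) * ψ (2 * m - t - c) - ψ (m - c) := by
    intro c
    have h := huc (1 / 2) ⟨by norm_num, by norm_num⟩ (t - c) (2 * m - t - c)
    rw [sq_abs, show (t - c - (2 * m - t - c)) ^ 2 = 4 * (t - m) ^ 2 by ring,
      show (1 / 2 : ℝ) * (t - c) + (1 - 1 / 2) * (2 * m - t - c) = m - c by ring] at h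
    linarith
  have i1 := (hψint t).const_mul (1 / 2)
  have i2 := (hψint (2 * m - t)).const_mul (1 / 2)
  have hi := integral_mono (μ := μ) (integrable_const _) ((i1.add i2).sub (hψint m)) pt
  have hs : ∫ c, ((1 / 2) * ψ (t - c) + (1 / 2) * ψ (2 * m - t - c) - ψ (m - c)) ∂μ
      = (1 / 2) * ∫ c, ψ (t - c) ∂μ + (1 / 2) * ∫ c, ψ (2 * m - t - c) ∂μ
        - ∫ c, ψ (m - c) ∂μ := by
    have i3 : Integrable (fun c => (1 / 2) * ψ (t - c) + (1 / 2) * ψ (2 * m - t - c)) μ := i1.add i2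
    rw [integral_sub i3 (hψint m), integral_add i1 i2, integral_const_mul,
      integral_const_mul]
  have hi' : (1 / 4) * δ₀ (4 * (t - m) ^ 2) ≤
      ∫ c, ((1 / 2) * ψ (t - c) + (1 / 2) * ψ (2 * m - t - c) - ψ (m - c)) ∂μ := by
    simpa using hi
  rw [hs, key] at hi'
  have h0 := hδnn (4 * (t - m) ^ 2) (by positivity)
  constructor <;> linarith
end

section
/- For every ε > 0 there exists a sequence (μ_k)_{k∈ℕ} of Borel probability measures on ℝ, each having a continuous everywhere-positive density with respect to Lebesgue measure and each symmetric about its mean, such that the mean of μ_k equals ε for every k (so |∫c dμ_k(c)| ≥ ε), and μ_k((0,∞)) − μ_k((−∞,0)) → 0 as k → ∞ (hence ∫c dμ_k(c) · (μ_k((0,∞)) − μ_k((−∞,0))) → 0). -/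
open MeasureTheory

lemma gauss_diff_bound (ε : ℝ) (hε : 0 < ε) (k : ℕ) (v : NNReal) (hv : v = ((k:NNReal)+1)^2) :
    0 ≤ ((ProbabilityTheory.gaussianReal ε v) (Set.Ioi 0)).toReal
        - ((ProbabilityTheory.gaussianReal ε v) (Set.Iio 0)).toReal ∧
    ((ProbabilityTheory.gaussianReal ε v) (Set.Ioi 0)).toReal
        - ((ProbabilityTheory.gaussianReal ε v) (Set.Iio 0)).toReal
      ≤ (2 * ε) * (1 / ((k:ℝ)+1)) := by
  have hv0 : v ≠ 0 := by rw [hv]; positivity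
  set μ := ProbabilityTheory.gaussianReal ε v with hμ
  have hmap : μ.map (fun x => 2 * ε - x) = μ := by
    rw [hμ, ProbabilityTheory.gaussianReal_map_const_sub]
    congr 1; ring
  have h1 : μ (Set.Iio 0) = μ (Set.Ioi (2 * ε)) := by
    conv_lhs => rw [← hmap]
    rw [Measure.map_apply (by fun_prop) measurableSet_Iio]
    congr 1; ext x; simp
  have h2 : (μ (Set.Ioi 0)).toReal - (μ (Set.Iio 0)).toReal = (μ (Set.Ioc 0 (2*ε))).toReal := by
    rw [h1, ← Set.Ioc_union_Ioi_eq_Ioi (show (0:ℝ) ≤ 2 * ε by positivity),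
      measure_union (Set.Ioc_disjoint_Ioi le_rfl) measurableSet_Ioi,
      ENNReal.toReal_add (measure_ne_top _ _) (measure_ne_top _ _)]
    ring
  rw [h2]
  refine ⟨ENNReal.toReal_nonneg, ?_⟩
  have hk : (0:ℝ) < (k:ℝ) + 1 := by positivity
  have hb : ∀ x, ProbabilityTheory.gaussianPDFReal ε v x ≤ 1 / ((k:ℝ)+1) := by
    intro x
    rw [ProbabilityTheory.gaussianPDFReal, one_div]
    have e1 : Real.exp (-(x - ε)^2 / (2 * v)) ≤ 1 := by
      rw [Real.exp_le_one_iff]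
      apply div_nonpos_of_nonpos_of_nonneg
      · nlinarith [sq_nonneg (x - ε)]
      · positivity
    have e2 : (k:ℝ)+1 ≤ √(2 * Real.pi * v) := by
      apply Real.le_sqrt_of_sq_le
      rw [hv]; push_cast
      nlinarith [Real.pi_gt_three, sq_nonneg ((k:ℝ)+1)]
    calc _ ≤ (√(2 * Real.pi * v))⁻¹ * 1 := by gcongr
      _ ≤ _ := by rw [mul_one]; gcongr
  have h3 : μ (Set.Ioc 0 (2*ε)) ≤ ENNReal.ofReal ((2 * ε) * (1 / ((k:ℝ)+1))) := by
    rw [hμ, ProbabilityTheory.gaussianReal_apply _ hv0]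
    calc _ ≤ ∫⁻ x in Set.Ioc 0 (2*ε), ENNReal.ofReal (1 / ((k:ℝ)+1)) :=
          lintegral_mono fun x => ENNReal.ofReal_le_ofReal (hb x)
      _ = _ := by
          rw [setLIntegral_const, Real.volume_Ioc, sub_zero, mul_comm,
            ← ENNReal.ofReal_mul (by positivity)]
  exact ENNReal.toReal_le_of_le_ofReal (by positivity) h3

/-- for every `ε > 0` there is a sequence of Borel probability measures on `ℝ`,
each with a continuous everywhere-positive density and symmetric about its mean `ε`, whose
means all equal `ε`, and for which `μ_k((0,∞)) − μ_k((−∞,0)) → 0`; consequently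
`(∫ c dμ_k)·(μ_k((0,∞)) − μ_k((−∞,0))) → 0` as well. -/
theorem statement12 :
    ∀ ε : ℝ, 0 < ε →
      ∃ μ : ℕ → Measure ℝ,
        (∀ k, IsProbabilityMeasure (μ k)) ∧
        (∀ k, ∃ ρ : ℝ → ℝ, Continuous ρ ∧ (∀ x, 0 < ρ x) ∧
            μ k = volume.withDensity fun x => ENNReal.ofReal (ρ x)) ∧
        (∀ k, Integrable (fun c : ℝ => c) (μ k)) ∧
        (∀ k, (∫ c, c ∂(μ k)) = ε) ∧
        (∀ k, (μ k).map (fun c => c - ε) = (μ k).map (fun c => ε - c)) ∧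
        Filter.Tendsto (fun k => ((μ k) (Set.Ioi 0)).toReal - ((μ k) (Set.Iio 0)).toReal)
          Filter.atTop (nhds 0) ∧
        Filter.Tendsto (fun k => (∫ c, c ∂(μ k)) *
            (((μ k) (Set.Ioi 0)).toReal - ((μ k) (Set.Iio 0)).toReal))
          Filter.atTop (nhds 0) := by
  intro ε hε
  have hv0 : ∀ k : ℕ, ((k:NNReal)+1)^2 ≠ 0 := fun k => by positivity
  have hlim : Filter.Tendsto (fun k : ℕ =>
      ((ProbabilityTheory.gaussianReal ε (((k:NNReal)+1)^2)) (Set.Ioi 0)).toReal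
        - ((ProbabilityTheory.gaussianReal ε (((k:NNReal)+1)^2)) (Set.Iio 0)).toReal)
      Filter.atTop (nhds 0) := by
    refine squeeze_zero (fun k => (gauss_diff_bound ε hε k _ rfl).1)
      (fun k => (gauss_diff_bound ε hε k _ rfl).2) ?_
    simpa using (tendsto_one_div_add_atTop_nhds_zero_nat (𝕜 := ℝ)).const_mul (2 * ε)
  refine ⟨fun k => ProbabilityTheory.gaussianReal ε (((k:NNReal)+1)^2),
    fun k => inferInstance, fun k => ?_, fun k => ?_, fun k => ?_, fun k => ?_, hlim, ?_⟩
  · refine ⟨ProbabilityTheory.gaussianPDFReal ε (((k:NNReal)+1)^2), ?_,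
      fun x => ProbabilityTheory.gaussianPDFReal_pos _ _ _ (hv0 k), ?_⟩
    · rw [ProbabilityTheory.gaussianPDFReal_def]
      fun_prop
    · exact ProbabilityTheory.gaussianReal_of_var_ne_zero _ (hv0 k)
  · exact (ProbabilityTheory.memLp_id_gaussianReal 1).integrable le_rfl
  · exact ProbabilityTheory.integral_id_gaussianReal
  · rw [ProbabilityTheory.gaussianReal_map_const_sub, ProbabilityTheory.gaussianReal_map_sub_const]
  · simp only [ProbabilityTheory.integral_id_gaussianReal]
    simpa using hlim.const_mul ε
end

section
/- Let m = 1, X = [−1/2, 1/2], f ≡ 0, and ℓ_SPO+(d,c) := (1/2)(|2d−c| − 2d·sign(c) + |c|). Fix α > 0 and let μ be a Borel probability measure on ℝ with a continuous everywhere-positive density, symmetric about its mean, with ∫|c|dμ < ∞ and |μ((0,∞)) − μ((−∞,0))| ≥ α. Then for every d ∈ ℝ, ∫L(d,c)dμ(c) − inf_{d'∈ℝ} ∫L(d',c)dμ(c) ≤ (1/α)·( ∫ℓ_SPO+(d,c)dμ(c) − inf_{d'∈ℝ} ∫ℓ_SPO+(d',c)dμ(c) ). -/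
open MeasureTheory

lemma aux_sInf (c : ℝ) : sInf ((fun x => c * x) '' Set.Icc (-(1:ℝ)/2) (1/2)) = -|c|/2 := by
  apply IsLeast.csInf_eq
  constructor
  · rcases le_total 0 c with h | h
    · exact ⟨-1/2, ⟨by norm_num, by norm_num⟩, by simp only [abs_of_nonneg h]; ring⟩
    · exact ⟨1/2, ⟨by norm_num, by norm_num⟩, by simp only [abs_of_nonpos h]; ring⟩
  · rintro _ ⟨x, ⟨h1, h2⟩, rfl⟩
    rcases le_total 0 c with h | h
    · simp only [abs_of_nonneg h]; nlinarith
    · simp only [abs_of_nonpos h]; nlinarith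

lemma aux_sign (c : ℝ) : Real.sign c =
    (Set.Ioi (0:ℝ)).indicator (fun _ => (1:ℝ)) c - (Set.Iio (0:ℝ)).indicator (fun _ => (1:ℝ)) c := by
  rcases lt_trichotomy c 0 with h | h | h
  · simp [Real.sign_of_neg h, h, h.le]
  · simp [h]
  · simp [Real.sign_of_pos h, h, h.le]

lemma aux_sub (d c : ℝ) : |c| - 2 * d * Real.sign c ≤ |2 * d - c| := by
  rcases lt_trichotomy c 0 with h | h | h
  · rw [Real.sign_of_neg h, abs_of_neg h]; linarith [le_abs_self (2 * d - c)]
  · simp [h]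
  · rw [Real.sign_of_pos h, abs_of_pos h]; linarith [neg_abs_le (2 * d - c)]

lemma aux_nonneg (d c : ℝ) : 0 ≤ (1/2) * (|2 * d - c| - 2 * d * Real.sign c + |c|) := by
  rcases lt_trichotomy c 0 with h | h | h
  · rw [Real.sign_of_neg h, abs_of_neg h]; linarith [neg_abs_le (2 * d - c)]
  · simp [h]
  · rw [Real.sign_of_pos h, abs_of_pos h]; linarith [le_abs_self (2 * d - c)]


/-- in the one-dimensional case `X = [−1/2, 1/2]`, `f ≡ 0`, the SPO+ loss
`ℓ_SPO+(d,c) = (1/2)(|2d−c| − 2d·sign(c) + |c|)` is calibrated with constant `1/α` on the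
class of continuous symmetric distributions with margin at least `α`:
excess true risk ≤ (1/α) · excess SPO+ risk. -/
theorem statement13 (α : ℝ) (hα : 0 < α)
    (xs : ℝ → ℝ)
    (hxsmem : ∀ d : ℝ, xs d ∈ Set.Icc (-(1:ℝ)/2) (1/2))
    (hxsmin : ∀ d : ℝ, ∀ x ∈ Set.Icc (-(1:ℝ)/2) (1/2), d * xs d ≤ d * x)
    (μ : Measure ℝ) [IsProbabilityMeasure μ]
    (hdens : ∃ ρ : ℝ → ℝ, Continuous ρ ∧ (∀ x, 0 < ρ x) ∧
        μ = volume.withDensity fun x => ENNReal.ofReal (ρ x))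
    (hint : Integrable (fun c : ℝ => |c|) μ)
    (hsymm : μ.map (fun c => c - ∫ x, x ∂μ) = μ.map (fun c => (∫ x, x ∂μ) - c))
    (hmargin : α ≤ |(μ (Set.Ioi 0)).toReal - (μ (Set.Iio 0)).toReal|) :
    ∀ d : ℝ,
      (∫ c, (c * xs d - sInf ((fun x => c * x) '' Set.Icc (-(1:ℝ)/2) (1/2))) ∂μ)
          - (⨅ d' : ℝ, ∫ c, (c * xs d' - sInf ((fun x => c * x) '' Set.Icc (-(1:ℝ)/2) (1/2))) ∂μ)
        ≤ (1 / α) *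
          ((∫ c, (1/2) * (|2 * d - c| - 2 * d * Real.sign c + |c|) ∂μ)
            - (⨅ d' : ℝ, ∫ c, (1/2) * (|2 * d' - c| - 2 * d' * Real.sign c + |c|) ∂μ)) := by
  set b : ℝ := ∫ x, x ∂μ with hb
  set p : ℝ := (μ (Set.Ioi 0)).toReal - (μ (Set.Iio 0)).toReal with hp
  have hid : Integrable (fun c : ℝ => c) μ :=
    (integrable_norm_iff (f := fun c : ℝ => c) (by fun_prop)).1 hint
  have hi1 : Integrable ((Set.Ioi (0:ℝ)).indicator (fun _ => (1:ℝ))) μ :=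
    (integrable_const 1).indicator measurableSet_Ioi
  have hi2 : Integrable ((Set.Iio (0:ℝ)).indicator (fun _ => (1:ℝ))) μ :=
    (integrable_const 1).indicator measurableSet_Iio
  have hisign : Integrable (fun c : ℝ => Real.sign c) μ := by
    simp_rw [aux_sign]; exact hi1.sub hi2
  have hEsign : ∫ c, Real.sign c ∂μ = p := by
    simp_rw [aux_sign]
    rw [integral_sub hi1 hi2, integral_indicator measurableSet_Ioi,
      integral_indicator measurableSet_Iio]
    simp [hp, Measure.real]
  have hiabs : ∀ d : ℝ, Integrable (fun c : ℝ => |2 * d - c|) μ := fun d =>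
    ((integrable_const (2 * d)).sub hid).abs
  have hR : ∀ d : ℝ, ∫ c, (c * xs d - sInf ((fun x => c * x) '' Set.Icc (-(1:ℝ)/2) (1/2))) ∂μ
      = b * xs d + (∫ c, |c| ∂μ) / 2 := by
    intro d
    simp_rw [aux_sInf]
    have : ∀ c : ℝ, c * xs d - -|c|/2 = c * xs d + |c| / 2 := fun c => by ring
    simp_rw [this]
    rw [integral_add (hid.mul_const _) (hint.div_const _), integral_mul_const, integral_div]
  have hS : ∀ d : ℝ, ∫ c, (1/2) * (|2 * d - c| - 2 * d * Real.sign c + |c|) ∂μ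
      = (1/2) * ((∫ c, |2 * d - c| ∂μ) - 2 * d * p + ∫ c, |c| ∂μ) := by
    intro d
    have h3 : Integrable (fun c : ℝ => |2 * d - c| - 2 * d * Real.sign c) μ :=
      (hiabs d).sub (hisign.const_mul _)
    rw [integral_const_mul, integral_add h3 hint,
      integral_sub (hiabs d) (hisign.const_mul _), integral_const_mul, hEsign]
  -- symmetry: reflection preserves the measure
  have hrefl : μ.map (fun c => 2 * b - c) = μ := by
    have h := congrArg (fun ν => Measure.map (fun y : ℝ => y + b) ν) hsymm
    rw [Measure.map_map (by fun_prop) (by fun_prop),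
      Measure.map_map (by fun_prop) (by fun_prop)] at h
    have e1 : (fun y : ℝ => y + b) ∘ (fun c => c - b) = id := by ext; simp
    have e2 : (fun y : ℝ => y + b) ∘ (fun c => b - c) = fun c => 2 * b - c := by
      ext; simp; ring
    rw [e1, e2, Measure.map_id] at h
    exact h.symm
  have hEb : ∫ c, |2 * b - c| ∂μ = ∫ c, |c| ∂μ := by
    conv_rhs => rw [← hrefl]
    rw [integral_map (by fun_prop) (by fun_prop)]
  have hIio : μ (Set.Iio 0) = μ (Set.Ioi (2 * b)) := by
    conv_lhs => rw [← hrefl]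
    rw [Measure.map_apply (by fun_prop) measurableSet_Iio]
    congr 1; ext c; simp
  have hbp : 0 ≤ b * p := by
    rcases le_total 0 b with h | h
    · apply mul_nonneg h
      have : μ (Set.Iio 0) ≤ μ (Set.Ioi 0) := by
        rw [hIio]; exact measure_mono (Set.Ioi_subset_Ioi (by linarith))
      exact sub_nonneg.2 (ENNReal.toReal_mono (measure_ne_top _ _) this)
    · apply mul_nonneg_of_nonpos_of_nonpos h
      have : μ (Set.Ioi 0) ≤ μ (Set.Iio 0) := by
        rw [hIio]; exact measure_mono (Set.Ioi_subset_Ioi (by linarith))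
      exact sub_nonpos.2 (ENNReal.toReal_mono (measure_ne_top _ _) this)
  have hbdd : BddBelow (Set.range fun d' : ℝ =>
      ∫ c, (1/2) * (|2 * d' - c| - 2 * d' * Real.sign c + |c|) ∂μ) := by
    refine ⟨0, ?_⟩
    rintro _ ⟨d, rfl⟩
    exact integral_nonneg fun c => aux_nonneg d c
  intro d
  have hinf1 : -|b|/2 + (∫ c, |c| ∂μ) / 2 ≤
      ⨅ d' : ℝ, ∫ c, (c * xs d' - sInf ((fun x => c * x) '' Set.Icc (-(1:ℝ)/2) (1/2))) ∂μ := by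
    apply le_ciInf
    intro d'
    rw [hR]
    obtain ⟨h1, h2⟩ := hxsmem d'
    rcases le_total 0 b with h | h
    · rw [abs_of_nonneg h]; nlinarith
    · rw [abs_of_nonpos h]; nlinarith
  have hinfd := ciInf_le hbdd d
  have hinfb := ciInf_le hbdd b
  by_cases hcase : b = 0 ∨ 0 < d * b
  · have hz : b * xs d ≤ -|b|/2 := by
      rcases hcase with h | h
      · simp [h]
      · rcases pos_and_pos_or_neg_and_neg_of_mul_pos h with ⟨h1, h2⟩ | ⟨h1, h2⟩
        · have := hxsmin d (-1/2) ⟨by norm_num, by norm_num⟩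
          have := le_of_mul_le_mul_left this h1
          rw [abs_of_pos h2]; nlinarith
        · have := hxsmin d (1/2) ⟨by norm_num, by norm_num⟩
          have := (mul_le_mul_left_of_neg h1).1 this
          rw [abs_of_neg h2]; nlinarith
    refine le_trans (b := 0) ?_ ?_
    · rw [hR d]; linarith
    · exact mul_nonneg (by positivity) (sub_nonneg.2 hinfd)
  · push Not at hcase
    obtain ⟨hb0, hdb⟩ := hcase
    have hp0 : p ≠ 0 := by
      intro h; rw [h] at hmargin; simp at hmargin; linarith
    have hbp' : 0 < b * p := lt_of_le_of_ne hbp (mul_ne_zero hb0 hp0).symm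
    have hdp : d * p ≤ 0 := by
      rcases pos_and_pos_or_neg_and_neg_of_mul_pos hbp' with ⟨h1, h2⟩ | ⟨h1, h2⟩
      · have : d ≤ 0 := by by_contra! h; nlinarith
        nlinarith
      · have : 0 ≤ d := by by_contra! h; nlinarith
        nlinarith
    have hbpa : α * |b| ≤ b * p := by
      rw [← abs_of_nonneg hbp, abs_mul]; nlinarith [abs_nonneg b]
    have hsub : (∫ c, |c| ∂μ) - 2 * d * p ≤ ∫ c, |2 * d - c| ∂μ := by
      rw [← hEsign, ← integral_const_mul, ← integral_sub hint (hisign.const_mul _)]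
      exact integral_mono (hint.sub (hisign.const_mul _)) (hiabs d) fun c => aux_sub d c
    have hxb : b * xs d ≤ |b| / 2 := by
      obtain ⟨h1, h2⟩ := hxsmem d
      rcases le_total 0 b with h | h
      · rw [abs_of_nonneg h]; nlinarith
      · rw [abs_of_nonpos h]; nlinarith
    refine le_trans (b := |b|) ?_ ?_
    · rw [hR d]; linarith
    · rw [one_div, inv_mul_eq_div, le_div_iff₀ hα]
      rw [hS b, hEb] at hinfb
      rw [hS d]
      linarith
end

section
/- Let Q be an m×m symmetric positive definite matrix, p ∈ ℝ^m nonzero, b ∈ ℝ, X := {x ∈ ℝ^m : pᵀx = b}, and A := Q⁻¹ − (1/(pᵀQ⁻¹p)) Q⁻¹p (Q⁻¹p)ᵀ. Then: (i) for every d ∈ ℝ^m, the unique minimizer of x ↦ (1/2)xᵀQx − dᵀx over X is x*(d) = A d + (b/(pᵀQ⁻¹p)) Q⁻¹p; (ii) for all d, c ∈ ℝ^m, the optimality gap L(d,c) := (1/2)x*(d)ᵀQx*(d) − cᵀx*(d) − min_{x∈X}((1/2)xᵀQx − cᵀx) equals (1/2)(d−c)ᵀA(d−c); (iii) consequently ℓ_SPO+(d,c)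 := L(c, 2d−c) = 2(c−d)ᵀA(c−d) = 4·L(d,c). -/
open Matrix

/-- The matrix `A = Q⁻¹ − (1/(pᵀQ⁻¹p)) Q⁻¹p (Q⁻¹p)ᵀ`. -/
noncomputable def Amat {m : ℕ} (Q : Matrix (Fin m) (Fin m) ℝ) (p : Fin m → ℝ) :
    Matrix (Fin m) (Fin m) ℝ :=
  Q⁻¹ - (1 / (p ⬝ᵥ (Q⁻¹ *ᵥ p))) • Matrix.vecMulVec (Q⁻¹ *ᵥ p) (Q⁻¹ *ᵥ p)

/-- The closed-form minimizer `x*(d) = A d + (b/(pᵀQ⁻¹p)) Q⁻¹ p` of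
`(1/2)xᵀQx − dᵀx` over `{x : pᵀx = b}`. -/
noncomputable def xstarQP {m : ℕ} (Q : Matrix (Fin m) (Fin m) ℝ) (p : Fin m → ℝ) (b : ℝ)
    (d : Fin m → ℝ) : Fin m → ℝ :=
  Amat Q p *ᵥ d + (b / (p ⬝ᵥ (Q⁻¹ *ᵥ p))) • (Q⁻¹ *ᵥ p)

/-- The optimality-gap (true) loss for the equality-constrained quadratic program. -/
noncomputable def LQP {m : ℕ} (Q : Matrix (Fin m) (Fin m) ℝ) (p : Fin m → ℝ) (b : ℝ)
    (d c : Fin m → ℝ) : ℝ :=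
  1 / 2 * (xstarQP Q p b d ⬝ᵥ (Q *ᵥ xstarQP Q p b d)) - c ⬝ᵥ xstarQP Q p b d
    - sInf ((fun x => 1 / 2 * (x ⬝ᵥ (Q *ᵥ x)) - c ⬝ᵥ x) '' {x : Fin m → ℝ | p ⬝ᵥ x = b})

lemma amat_mulVec {m : ℕ} (Q : Matrix (Fin m) (Fin m) ℝ) (p v : Fin m → ℝ) :
    Amat Q p *ᵥ v = Q⁻¹ *ᵥ v -
      (((Q⁻¹ *ᵥ p) ⬝ᵥ v) / (p ⬝ᵥ (Q⁻¹ *ᵥ p))) • (Q⁻¹ *ᵥ p) := by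
  unfold Amat
  rw [Matrix.sub_mulVec, Matrix.smul_mulVec, Matrix.vecMulVec_mulVec]
  ext i
  simp
  ring

lemma q_pos {m : ℕ} (Q : Matrix (Fin m) (Fin m) ℝ) (hQ : Q.PosDef)
    (p : Fin m → ℝ) (hp : p ≠ 0) : 0 < p ⬝ᵥ (Q⁻¹ *ᵥ p) := by
  have := hQ.inv.dotProduct_mulVec_pos hp
  simpa using this

lemma symm_dot {m : ℕ} (Q : Matrix (Fin m) (Fin m) ℝ) (hQ : Q.IsHermitian)
    (x y : Fin m → ℝ) : x ⬝ᵥ (Q *ᵥ y) = y ⬝ᵥ (Q *ᵥ x) := by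
  have h : Qᵀ = Q := by
    rw [← Matrix.conjTranspose_eq_transpose_of_trivial]
    exact hQ
  rw [Matrix.dotProduct_mulVec, ← Matrix.mulVec_transpose, h, dotProduct_comm]

lemma Q_inv_mul {m : ℕ} (Q : Matrix (Fin m) (Fin m) ℝ) (hQ : Q.PosDef)
    (v : Fin m → ℝ) : Q *ᵥ (Q⁻¹ *ᵥ v) = v := by
  rw [Matrix.mulVec_mulVec, Matrix.mul_nonsing_inv _ (isUnit_iff_ne_zero.mpr hQ.det_pos.ne'),
    Matrix.one_mulVec]

lemma p_amat {m : ℕ} (Q : Matrix (Fin m) (Fin m) ℝ) (hQ : Q.PosDef)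
    (p : Fin m → ℝ) (hp : p ≠ 0) (v : Fin m → ℝ) : p ⬝ᵥ (Amat Q p *ᵥ v) = 0 := by
  have hs := (q_pos Q hQ p hp).ne'
  rw [amat_mulVec, dotProduct_sub, dotProduct_smul, smul_eq_mul, div_mul_cancel₀ _ hs,
    symm_dot _ hQ.inv.isHermitian p v, dotProduct_comm v, sub_self]

lemma p_xstar {m : ℕ} (Q : Matrix (Fin m) (Fin m) ℝ) (hQ : Q.PosDef)
    (p : Fin m → ℝ) (hp : p ≠ 0) (b : ℝ) (d : Fin m → ℝ) : p ⬝ᵥ xstarQP Q p b d = b := by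
  have hs := (q_pos Q hQ p hp).ne'
  rw [xstarQP, dotProduct_add, p_amat Q hQ p hp, dotProduct_smul, smul_eq_mul,
    div_mul_cancel₀ _ hs, zero_add]

lemma Q_amat {m : ℕ} (Q : Matrix (Fin m) (Fin m) ℝ) (hQ : Q.PosDef)
    (p v : Fin m → ℝ) : ∃ t : ℝ, Q *ᵥ (Amat Q p *ᵥ v) = v - t • p := by
  refine ⟨((Q⁻¹ *ᵥ p) ⬝ᵥ v) / (p ⬝ᵥ (Q⁻¹ *ᵥ p)), ?_⟩
  rw [amat_mulVec, Matrix.mulVec_sub, Matrix.mulVec_smul, Q_inv_mul Q hQ, Q_inv_mul Q hQ]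

lemma Q_xstar {m : ℕ} (Q : Matrix (Fin m) (Fin m) ℝ) (hQ : Q.PosDef)
    (p : Fin m → ℝ) (b : ℝ) (d : Fin m → ℝ) :
    ∃ t : ℝ, Q *ᵥ xstarQP Q p b d = d + t • p := by
  obtain ⟨t, ht⟩ := Q_amat Q hQ p d
  refine ⟨b / (p ⬝ᵥ (Q⁻¹ *ᵥ p)) - t, ?_⟩
  rw [xstarQP, Matrix.mulVec_add, ht, Matrix.mulVec_smul, Q_inv_mul Q hQ, sub_smul]
  abel

lemma gap {m : ℕ} (Q : Matrix (Fin m) (Fin m) ℝ) (hQ : Q.PosDef)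
    (p : Fin m → ℝ) (hp : p ≠ 0) (b : ℝ) (d x : Fin m → ℝ) (hx : p ⬝ᵥ x = b) :
    1 / 2 * (x ⬝ᵥ (Q *ᵥ x)) - d ⬝ᵥ x =
      1 / 2 * (xstarQP Q p b d ⬝ᵥ (Q *ᵥ xstarQP Q p b d)) - d ⬝ᵥ xstarQP Q p b d +
      1 / 2 * ((x - xstarQP Q p b d) ⬝ᵥ (Q *ᵥ (x - xstarQP Q p b d))) := by
  obtain ⟨t, ht⟩ := Q_xstar Q hQ p b d
  have hb := p_xstar Q hQ p hp b d
  generalize xstarQP Q p b d = y at *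
  have h1 := symm_dot Q hQ.isHermitian y x
  simp only [Matrix.mulVec_sub, dotProduct_sub, sub_dotProduct, h1]
  simp only [ht, dotProduct_add, dotProduct_smul, smul_eq_mul, dotProduct_comm x p,
    dotProduct_comm y p, dotProduct_comm x d, dotProduct_comm y d, hx, hb]
  ring

lemma LQP_eq {m : ℕ} (Q : Matrix (Fin m) (Fin m) ℝ) (hQ : Q.PosDef)
    (p : Fin m → ℝ) (hp : p ≠ 0) (b : ℝ) (d c : Fin m → ℝ) :
    LQP Q p b d c = 1 / 2 * ((d - c) ⬝ᵥ (Amat Q p *ᵥ (d - c))) := by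
  have hmin : IsLeast ((fun x => 1 / 2 * (x ⬝ᵥ (Q *ᵥ x)) - c ⬝ᵥ x) ''
      {x : Fin m → ℝ | p ⬝ᵥ x = b})
      (1 / 2 * (xstarQP Q p b c ⬝ᵥ (Q *ᵥ xstarQP Q p b c)) - c ⬝ᵥ xstarQP Q p b c) := by
    refine ⟨⟨_, p_xstar Q hQ p hp b c, rfl⟩, ?_⟩
    rintro _ ⟨x, hx, rfl⟩
    have h := hQ.posSemidef.dotProduct_mulVec_nonneg (x - xstarQP Q p b c)
    rw [star_trivial] at h
    have := gap Q hQ p hp b c x hx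
    simp only
    linarith
  rw [LQP, hmin.csInf_eq, gap Q hQ p hp b c _ (p_xstar Q hQ p hp b d), add_sub_cancel_left]
  have e : xstarQP Q p b d - xstarQP Q p b c = Amat Q p *ᵥ (d - c) := by
    simp only [xstarQP, Matrix.mulVec_sub]
    abel
  obtain ⟨t, ht⟩ := Q_amat Q hQ p (d - c)
  rw [e, ht, dotProduct_sub, dotProduct_smul, dotProduct_comm _ p, p_amat Q hQ p hp,
    dotProduct_comm]
  simp

/-- for the mean-variance portfolio problem with a single equality
constraint, (i) `x*(d)` is the unique minimizer of `(1/2)xᵀQx − dᵀx` over `{x : pᵀx = b}`;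
(ii) `L(d,c) = (1/2)(d−c)ᵀA(d−c)`; (iii) the SPO+ loss `L(c, 2d−c)` equals
`2(c−d)ᵀA(c−d) = 4 L(d,c)`. -/
theorem statement14 {m : ℕ} (Q : Matrix (Fin m) (Fin m) ℝ) (hQ : Q.PosDef)
    (p : Fin m → ℝ) (hp : p ≠ 0) (b : ℝ) :
    (∀ d : Fin m → ℝ,
      p ⬝ᵥ xstarQP Q p b d = b ∧
      ∀ x : Fin m → ℝ, p ⬝ᵥ x = b → x ≠ xstarQP Q p b d →
        1 / 2 * (xstarQP Q p b d ⬝ᵥ (Q *ᵥ xstarQP Q p b d)) - d ⬝ᵥ xstarQP Q p b d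
          < 1 / 2 * (x ⬝ᵥ (Q *ᵥ x)) - d ⬝ᵥ x) ∧
    (∀ d c : Fin m → ℝ,
      LQP Q p b d c = 1 / 2 * ((d - c) ⬝ᵥ (Amat Q p *ᵥ (d - c)))) ∧
    (∀ d c : Fin m → ℝ,
      LQP Q p b c ((2:ℝ) • d - c) = 2 * ((c - d) ⬝ᵥ (Amat Q p *ᵥ (c - d))) ∧
      LQP Q p b c ((2:ℝ) • d - c) = 4 * LQP Q p b d c) := by
  refine ⟨fun d => ⟨p_xstar Q hQ p hp b d, fun x hx hne => ?_⟩, LQP_eq Q hQ p hp b,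
    fun d c => ?_⟩
  · have h := hQ.dotProduct_mulVec_pos (sub_ne_zero.mpr hne)
    rw [star_trivial] at h
    have := gap Q hQ p hp b d x hx
    linarith
  · have h1 : c - ((2:ℝ) • d - c) = (2:ℝ) • (c - d) := by
      ext i
      simp
      ring
    have h2 : d - c = -(c - d) := by abel
    rw [LQP_eq Q hQ p hp, LQP_eq Q hQ p hp, h1, h2]
    simp only [Matrix.mulVec_smul, Matrix.mulVec_neg, dotProduct_smul, smul_dotProduct,
      neg_dotProduct, dotProduct_neg, smul_eq_mul]
    constructor <;> ring
end

section
/- Let A be an m×m symmetric positive semidefinite matrix, and let (w,c) be a pair of random vectors with values in ℝ^k × ℝ^m having finite second moments and such that the matrix E[wwᵀ] is invertible. Then the set of m×k matrices V minimizing E[(1/2)(Vw − c)ᵀA(Vw − c)] equals { V_LS + Ṽ : A Ṽ = 0 }, where V_LS is the unique minimizer of E[(1/2)‖Vw − c‖₂²]. In particular, every minimizer of the least-squares objective E[(1/2)‖Vw − c‖₂²] is also a minimizer of E[(1/2)(Vw − c)ᵀA(Vw − c)]. -/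
open MeasureTheory Matrix

/-- The weighted quadratic objective `V ↦ E[(1/2)(Vw − c)ᵀ A (Vw − c)]`. -/
noncomputable def quadObj {m k : ℕ} {Ω : Type*} [MeasurableSpace Ω] (P : Measure Ω)
    (A : Matrix (Fin m) (Fin m) ℝ) (w : Ω → Fin k → ℝ) (c : Ω → Fin m → ℝ)
    (V : Matrix (Fin m) (Fin k) ℝ) : ℝ :=
  ∫ ω, 1 / 2 * ((V *ᵥ w ω - c ω) ⬝ᵥ (A *ᵥ (V *ᵥ w ω - c ω))) ∂P

/-- The least-squares objective `V ↦ E[(1/2)‖Vw − c‖₂²]`. -/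
noncomputable def lsObj {m k : ℕ} {Ω : Type*} [MeasurableSpace Ω] (P : Measure Ω)
    (w : Ω → Fin k → ℝ) (c : Ω → Fin m → ℝ) (V : Matrix (Fin m) (Fin k) ℝ) : ℝ :=
  ∫ ω, 1 / 2 * (∑ j, ((V *ᵥ w ω - c ω) j) ^ 2) ∂P

lemma aux_quad_int {m : ℕ} {Ω : Type*} [MeasurableSpace Ω] (P : Measure Ω)
    (A : Matrix (Fin m) (Fin m) ℝ) (x y : Ω → Fin m → ℝ)
    (hx : ∀ i, MemLp (fun ω => x ω i) 2 P) (hy : ∀ i, MemLp (fun ω => y ω i) 2 P) :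
    Integrable (fun ω => x ω ⬝ᵥ (A *ᵥ y ω)) P := by
  simp only [dotProduct, mulVec, Finset.mul_sum]
  refine integrable_finsetSum _ fun i _ => integrable_finsetSum _ fun j _ => ?_
  have h := ((hx i).integrable_mul (hy j)).const_mul (A i j)
  refine h.congr (Filter.Eventually.of_forall fun ω => ?_)
  simp only [Pi.mul_apply]
  ring

lemma aux_mulVec_memLp {m k : ℕ} {Ω : Type*} [MeasurableSpace Ω] (P : Measure Ω)
    (V : Matrix (Fin m) (Fin k) ℝ) (w : Ω → Fin k → ℝ)
    (hw : ∀ i, MemLp (fun ω => w ω i) 2 P) (i : Fin m) :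
    MemLp (fun ω => (V *ᵥ w ω) i) 2 P := by
  simp only [dotProduct, mulVec]
  exact memLp_finsetSum _ fun j _ => (hw j).const_mul (V i j)

lemma aux_memLp {k : ℕ} {Ω : Type*} [MeasurableSpace Ω] (P : Measure Ω)
    (w : Ω → Fin k → ℝ) (hw : Measurable w)
    (hw2 : Integrable (fun ω => ∑ i, (w ω i) ^ 2) P) (i : Fin k) :
    MemLp (fun ω => w ω i) 2 P := by
  have hm : Measurable fun ω => w ω i := (measurable_pi_apply i).comp hw
  rw [memLp_two_iff_integrable_sq hm.aestronglyMeasurable]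
  refine hw2.mono' (hm.pow_const 2).aestronglyMeasurable (Filter.Eventually.of_forall fun ω => ?_)
  rw [Real.norm_of_nonneg (sq_nonneg _)]
  exact Finset.single_le_sum (f := fun i => (w ω i) ^ 2) (fun _ _ => sq_nonneg _)
    (Finset.mem_univ i)

lemma aux_mul_int {Ω : Type*} [MeasurableSpace Ω] (P : Measure Ω) (f g : Ω → ℝ)
    (hf : MemLp f 2 P) (hg : MemLp g 2 P) : Integrable (fun ω => f ω * g ω) P :=
  hf.integrable_mul hg

lemma aux_mom {m k : ℕ} {Ω : Type*} [MeasurableSpace Ω] (P : Measure Ω)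
    (V : Matrix (Fin m) (Fin k) ℝ) (w : Ω → Fin k → ℝ)
    (hw : ∀ i, MemLp (fun ω => w ω i) 2 P) (i : Fin m) (j : Fin k) :
    ∫ ω, (V *ᵥ w ω) i * w ω j ∂P
      = (V * (Matrix.of fun i j : Fin k => ∫ ω, w ω i * w ω j ∂P)) i j := by
  rw [Matrix.mul_apply]
  have hi : ∀ l, Integrable (fun ω => V i l * (w ω l * w ω j)) P := fun l =>
    (aux_mul_int P _ _ (hw l) (hw j)).const_mul _
  simp only [of_apply, mulVec, dotProduct, Finset.sum_mul, mul_assoc]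
  rw [integral_finsetSum _ fun l _ => hi l]
  exact Finset.sum_congr rfl fun l _ => integral_const_mul _ _

lemma aux_key {m k : ℕ} {Ω : Type*} [MeasurableSpace Ω]
    (P : Measure Ω)
    (A : Matrix (Fin m) (Fin m) ℝ) (hA : A.PosSemidef)
    (w : Ω → Fin k → ℝ) (c : Ω → Fin m → ℝ)
    (hw : ∀ i, MemLp (fun ω => w ω i) 2 P) (hc : ∀ i, MemLp (fun ω => c ω i) 2 P)
    (hinv : IsUnit (Matrix.of fun i j : Fin k => ∫ ω, w ω i * w ω j ∂P))
    (U : Matrix (Fin m) (Fin k) ℝ)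
    (hU : ∀ i j, ∫ ω, (U *ᵥ w ω - c ω) i * w ω j ∂P = 0) (V : Matrix (Fin m) (Fin k) ℝ) :
    quadObj P A w c U ≤ quadObj P A w c V ∧
      (quadObj P A w c V ≤ quadObj P A w c U ↔ A * (V - U) = 0) := by
  set D := V - U with hD
  have hr : ∀ i, MemLp (fun ω => (U *ᵥ w ω - c ω) i) 2 P := fun i =>
    (aux_mulVec_memLp P U w hw i).sub (hc i)
  have hd := aux_mulVec_memLp P D w hw
  have hAT : Aᵀ = A := by simpa using hA.isHermitian.eq
  have hcross : ∫ ω, (D *ᵥ w ω) ⬝ᵥ (A *ᵥ (U *ᵥ w ω - c ω)) ∂P = 0 := by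
    have e : ∀ ω, (D *ᵥ w ω) ⬝ᵥ (A *ᵥ (U *ᵥ w ω - c ω)) =
        ∑ i, ∑ l, ∑ j, (A i l * D i j) * ((U *ᵥ w ω - c ω) l * w ω j) := by
      intro ω
      generalize U *ᵥ w ω - c ω = r
      simp only [dotProduct, mulVec, Finset.mul_sum, Finset.sum_mul]
      refine Finset.sum_congr rfl fun i _ => Finset.sum_congr rfl fun l _ =>
        Finset.sum_congr rfl fun j _ => by ring
    have hi : ∀ i l j, Integrable
        (fun ω => (A i l * D i j) * ((U *ᵥ w ω - c ω) l * w ω j)) P := fun i l j =>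
      ((hr l).integrable_mul (hw j)).const_mul _
    simp_rw [e]
    rw [integral_finsetSum _ fun i _ => integrable_finsetSum _ fun l _ =>
      integrable_finsetSum _ fun j _ => hi i l j]
    refine Finset.sum_eq_zero fun i _ => ?_
    rw [integral_finsetSum _ fun l _ => integrable_finsetSum _ fun j _ => hi i l j]
    refine Finset.sum_eq_zero fun l _ => ?_
    rw [integral_finsetSum _ fun j _ => hi i l j]
    refine Finset.sum_eq_zero fun j _ => ?_
    rw [integral_const_mul, hU, mul_zero]
  have hI0 := aux_quad_int P A _ _ hr hr
  have hI1 := aux_quad_int P A _ _ hd hr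
  have hI2 := aux_quad_int P A _ _ hd hd
  have hexp : quadObj P A w c V = quadObj P A w c U +
      1 / 2 * ∫ ω, (D *ᵥ w ω) ⬝ᵥ (A *ᵥ (D *ᵥ w ω)) ∂P := by
    have e : ∀ ω, 1 / 2 * ((V *ᵥ w ω - c ω) ⬝ᵥ (A *ᵥ (V *ᵥ w ω - c ω))) =
        (1 / 2 * ((U *ᵥ w ω - c ω) ⬝ᵥ (A *ᵥ (U *ᵥ w ω - c ω))) +
        (D *ᵥ w ω) ⬝ᵥ (A *ᵥ (U *ᵥ w ω - c ω))) +
        1 / 2 * ((D *ᵥ w ω) ⬝ᵥ (A *ᵥ (D *ᵥ w ω))) := by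
      intro ω
      have h1 : V *ᵥ w ω - c ω = (U *ᵥ w ω - c ω) + D *ᵥ w ω := by
        rw [hD, sub_mulVec]; abel
      rw [h1]
      generalize U *ᵥ w ω - c ω = r
      generalize D *ᵥ w ω = d
      have h2 : r ⬝ᵥ (A *ᵥ d) = d ⬝ᵥ (A *ᵥ r) := by
        rw [dotProduct_mulVec, ← mulVec_transpose, hAT, dotProduct_comm]
      rw [mulVec_add, add_dotProduct, dotProduct_add, dotProduct_add, h2]
      ring
    unfold quadObj
    simp_rw [e]
    have hI3 : Integrable (fun ω => 1 / 2 * ((U *ᵥ w ω - c ω) ⬝ᵥ (A *ᵥ (U *ᵥ w ω - c ω))) +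
        (D *ᵥ w ω) ⬝ᵥ (A *ᵥ (U *ᵥ w ω - c ω))) P := (hI0.const_mul _).add hI1
    rw [integral_add hI3 (hI2.const_mul _),
      integral_add (hI0.const_mul _) hI1, hcross, add_zero, integral_const_mul (1 / 2) (fun ω => (D *ᵥ w ω) ⬝ᵥ (A *ᵥ (D *ᵥ w ω)))]
  have hnn : ∀ ω, 0 ≤ (D *ᵥ w ω) ⬝ᵥ (A *ᵥ (D *ᵥ w ω)) := fun ω => by
    simpa using hA.dotProduct_mulVec_nonneg (D *ᵥ w ω)
  have hint : 0 ≤ ∫ ω, (D *ᵥ w ω) ⬝ᵥ (A *ᵥ (D *ᵥ w ω)) ∂P := integral_nonneg hnn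
  refine ⟨by linarith, fun h => ?_, fun h => ?_⟩
  · have h0 : ∫ ω, (D *ᵥ w ω) ⬝ᵥ (A *ᵥ (D *ᵥ w ω)) ∂P = 0 := by linarith
    rw [integral_eq_zero_iff_of_nonneg hnn hI2] at h0
    have h1 : ∀ᵐ ω ∂P, (A * D) *ᵥ w ω = 0 := by
      filter_upwards [h0] with ω hω
      rw [← mulVec_mulVec]
      exact (hA.dotProduct_mulVec_zero_iff _).1 (by simpa using hω)
    have h2 : (A * D) * (Matrix.of fun i j : Fin k => ∫ ω, w ω i * w ω j ∂P) = 0 := by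
      ext i j
      have : ∫ ω, ((A * D) *ᵥ w ω) i * w ω j ∂P = 0 := by
        rw [integral_congr_ae (g := fun _ => (0 : ℝ)), integral_zero]
        filter_upwards [h1] with ω hω
        simp [hω]
      rw [Matrix.zero_apply, ← this, aux_mom P _ w hw]
    obtain ⟨N, hN⟩ := hinv.exists_right_inv
    rw [← Matrix.mul_one (A * D), ← hN, ← Matrix.mul_assoc, h2, Matrix.zero_mul]
  · have : ∀ ω, (D *ᵥ w ω) ⬝ᵥ (A *ᵥ (D *ᵥ w ω)) = 0 := fun ω => by
      rw [mulVec_mulVec, h, zero_mulVec, dotProduct_zero]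
    simp only [this, integral_zero] at hexp
    linarith

lemma aux_ls {m k : ℕ} {Ω : Type*} [MeasurableSpace Ω] (P : Measure Ω)
    (w : Ω → Fin k → ℝ) (c : Ω → Fin m → ℝ) (V : Matrix (Fin m) (Fin k) ℝ) :
    lsObj P w c V = quadObj P 1 w c V := by
  unfold lsObj quadObj
  simp only [one_mulVec, dotProduct, sq]

lemma aux_normal {m k : ℕ} {Ω : Type*} [MeasurableSpace Ω] (P : Measure Ω)
    (w : Ω → Fin k → ℝ) (c : Ω → Fin m → ℝ)
    (hw : ∀ i, MemLp (fun ω => w ω i) 2 P) (hc : ∀ i, MemLp (fun ω => c ω i) 2 P)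
    (hinv : IsUnit (Matrix.of fun i j : Fin k => ∫ ω, w ω i * w ω j ∂P)) :
    ∃ U : Matrix (Fin m) (Fin k) ℝ, ∀ i j, ∫ ω, (U *ᵥ w ω - c ω) i * w ω j ∂P = 0 := by
  obtain ⟨N, hN⟩ := hinv.exists_left_inv
  set B : Matrix (Fin m) (Fin k) ℝ := Matrix.of fun i j => ∫ ω, c ω i * w ω j ∂P with hB
  refine ⟨B * N, fun i j => ?_⟩
  set U := B * N with hU
  have h : U * (Matrix.of fun i j : Fin k => ∫ ω, w ω i * w ω j ∂P) = B := by
    rw [hU, Matrix.mul_assoc, hN, Matrix.mul_one]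
  have h1 : ∫ ω, (U *ᵥ w ω) i * w ω j ∂P = ∫ ω, c ω i * w ω j ∂P := by
    rw [aux_mom P _ w hw, h, hB, of_apply]
  simp only [Pi.sub_apply, sub_mul]
  rw [integral_sub (aux_mul_int P _ _ (aux_mulVec_memLp P U w hw i) (hw j))
    (aux_mul_int P _ _ (hc i) (hw j)), h1, sub_self]

/-- for `A ⪰ 0` and `E[wwᵀ]` invertible, the minimizers of
`E[(1/2)(Vw−c)ᵀA(Vw−c)]` are exactly `V_LS + Ṽ` with `AṼ = 0`, where `V_LS` is the unique
least-squares minimizer; in particular every least-squares minimizer minimizes the `A`-weighted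
objective. -/
theorem statement15 {m k : ℕ} {Ω : Type*} [MeasurableSpace Ω]
    (P : Measure Ω) [IsProbabilityMeasure P]
    (A : Matrix (Fin m) (Fin m) ℝ) (hA : A.PosSemidef)
    (w : Ω → Fin k → ℝ) (c : Ω → Fin m → ℝ)
    (hw : Measurable w) (hc : Measurable c)
    (hw2 : Integrable (fun ω => ∑ i, (w ω i) ^ 2) P)
    (hc2 : Integrable (fun ω => ∑ j, (c ω j) ^ 2) P)
    (hinv : IsUnit (Matrix.of fun i j : Fin k => ∫ ω, w ω i * w ω j ∂P)) :
    ∃ VLS : Matrix (Fin m) (Fin k) ℝ,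
      (∀ V, lsObj P w c VLS ≤ lsObj P w c V) ∧
      (∀ V, (∀ V', lsObj P w c V ≤ lsObj P w c V') → V = VLS) ∧
      {V : Matrix (Fin m) (Fin k) ℝ | ∀ V', quadObj P A w c V ≤ quadObj P A w c V'}
        = {V : Matrix (Fin m) (Fin k) ℝ | ∃ Vt : Matrix (Fin m) (Fin k) ℝ, A * Vt = 0 ∧ V = VLS + Vt} ∧
      (∀ V : Matrix (Fin m) (Fin k) ℝ,
        (∀ V', lsObj P w c V ≤ lsObj P w c V') →
        ∀ V', quadObj P A w c V ≤ quadObj P A w c V') := by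
  have hw' := aux_memLp P w hw hw2
  have hc' := aux_memLp P c hc hc2
  obtain ⟨U, hU⟩ := aux_normal P w c hw' hc' hinv
  have key := aux_key P A hA w c hw' hc' hinv U hU
  have key1 := aux_key P 1 PosSemidef.one w c hw' hc' hinv U hU
  have huniq : ∀ V, (∀ V', lsObj P w c V ≤ lsObj P w c V') → V = U := by
    intro V hV
    have h := hV U
    rw [aux_ls, aux_ls, (key1 V).2, Matrix.one_mul] at h
    exact sub_eq_zero.1 h
  refine ⟨U, fun V => ?_, huniq, ?_, fun V hV V' => ?_⟩
  · rw [aux_ls, aux_ls]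
    exact (key1 V).1
  · ext V
    simp only [Set.mem_ofPred_eq]
    constructor
    · intro h
      exact ⟨V - U, (key V).2.1 (h U), by abel⟩
    · rintro ⟨Vt, h, rfl⟩ V'
      exact ((key (U + Vt)).2.2 (by simpa using h)).trans (key V').1
  · rw [huniq V hV]
    exact (key V').1
end

section
/- Let p ∈ ℝ^m with p_i > 0 for all i, B > 0, λ > 0, and d ∈ ℝ^m, and let K := {x ∈ ℝ^m : pᵀx ≤ B, 0 ≤ x ≤ 1}. Then a point x ∈ K maximizes dᵀx − (λ/2)‖x‖₂² over K if and only if there exists τ ≥ 0 such that τ·(B − pᵀx) = 0 and λ·x_i = max{0, min{λ, d_i − p_i·τ}} for every i ∈ {1,…,m}. -/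
open Matrix

theorem kkt_suff {m : ℕ} (p : Fin m → ℝ)
    (B : ℝ) (lam : ℝ) (hlam : 0 < lam) (d : Fin m → ℝ)
    (x : Fin m → ℝ) (τ : ℝ) (hτ : 0 ≤ τ) (hc : τ * (B - p ⬝ᵥ x) = 0)
    (hk : ∀ i, lam * x i = max 0 (min lam (d i - p i * τ)))
    (y : Fin m → ℝ) (hy : p ⬝ᵥ y ≤ B ∧ ∀ i, 0 ≤ y i ∧ y i ≤ 1) :
    d ⬝ᵥ y - lam / 2 * ∑ i, (y i) ^ 2 + lam / 2 * ∑ i, (y i - x i) ^ 2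
      ≤ d ⬝ᵥ x - lam / 2 * ∑ i, (x i) ^ 2 := by
  have h1 : ∀ i, d i * y i - lam / 2 * (y i) ^ 2 + lam / 2 * (y i - x i) ^ 2
      ≤ d i * x i - lam / 2 * (x i) ^ 2 + τ * (p i * y i - p i * x i) := by
    intro i
    obtain ⟨h0, h1⟩ := hy.2 i
    have h := hk i
    have key : (d i - p i * τ - lam * x i) * (y i - x i) ≤ 0 := by
      rcases le_total lam (d i - p i * τ) with h2 | h2
      · rw [min_eq_left h2, max_eq_right hlam.le] at h
        have : x i = 1 := by
          have : lam * (x i - 1) = 0 := by linarith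
          rcases mul_eq_zero.1 this with h | h <;> linarith
        rw [this]
        nlinarith
      · rw [min_eq_right h2] at h
        rcases le_total 0 (d i - p i * τ) with h3 | h3
        · rw [max_eq_right h3] at h
          rw [h]; simp
        · rw [max_eq_left h3] at h
          have : x i = 0 := by
            rcases mul_eq_zero.1 h with h | h <;> linarith
          rw [this]
          nlinarith
    nlinarith
  have h2 := Finset.sum_le_sum (fun i (_ : i ∈ Finset.univ) => h1 i)
  simp only [Finset.sum_add_distrib, Finset.sum_sub_distrib, ← Finset.mul_sum] at h2
  have h3 : τ * (p ⬝ᵥ y - p ⬝ᵥ x) ≤ 0 := by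
    have := mul_le_mul_of_nonneg_left hy.1 hτ
    nlinarith
  simp only [dotProduct] at h3 ⊢
  linarith

theorem kkt_exists {m : ℕ} (p : Fin m → ℝ) (hp : ∀ i, 0 < p i)
    (B : ℝ) (hB : 0 < B) (lam : ℝ) (hlam : 0 < lam) (d : Fin m → ℝ) :
    ∃ x : Fin m → ℝ, (p ⬝ᵥ x ≤ B ∧ ∀ i, 0 ≤ x i ∧ x i ≤ 1) ∧
      ∃ τ : ℝ, 0 ≤ τ ∧ τ * (B - p ⬝ᵥ x) = 0 ∧
        ∀ i, lam * x i = max 0 (min lam (d i - p i * τ)) := by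
  let X : ℝ → Fin m → ℝ := fun τ i => max 0 (min lam (d i - p i * τ)) / lam
  have hX : ∀ τ i, 0 ≤ X τ i ∧ X τ i ≤ 1 := by
    intro τ i
    refine ⟨div_nonneg (le_max_left _ _) hlam.le, (div_le_one hlam).2 ?_⟩
    exact max_le hlam.le (min_le_left _ _)
  have hX2 : ∀ τ i, lam * X τ i = max 0 (min lam (d i - p i * τ)) := by
    intro τ i
    exact mul_div_cancel₀ _ hlam.ne'
  by_cases h0 : p ⬝ᵥ X 0 ≤ B
  · exact ⟨X 0, ⟨h0, hX 0⟩, 0, le_rfl, by simp, hX2 0⟩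
  push Not at h0
  have hcont : Continuous (fun τ => p ⬝ᵥ X τ) := by
    simp only [dotProduct, X]
    fun_prop
  let T := ∑ i, |d i| / p i
  have hT : 0 ≤ T := Finset.sum_nonneg fun i _ => div_nonneg (abs_nonneg _) (hp i).le
  have hXT : X T = 0 := by
    funext i
    have h1 : |d i| / p i ≤ T := Finset.single_le_sum (f := fun i => |d i| / p i)
      (fun i _ => div_nonneg (abs_nonneg _) (hp i).le) (Finset.mem_univ i)
    rw [div_le_iff₀ (hp i)] at h1
    have h2 : d i - p i * T ≤ 0 := by linarith [le_abs_self (d i)]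
    simp only [X, Pi.zero_apply]
    rw [max_eq_left ((min_le_right _ _).trans h2), zero_div]
  obtain ⟨τ, hτ, h⟩ := intermediate_value_Icc' hT hcont.continuousOn
    (show B ∈ Set.Icc (p ⬝ᵥ X T) (p ⬝ᵥ X 0) from ⟨by rw [hXT]; simpa using hB.le, h0.le⟩)
  have h : p ⬝ᵥ X τ = B := h
  exact ⟨X τ, ⟨h.le, hX τ⟩, τ, hτ.1, by rw [h]; simp, hX2 τ⟩

/-- KKT characterization of the maximizer of the quadratically regularized
fractional knapsack problem: `x ∈ K` maximizes `dᵀx − (λ/2)‖x‖₂²` over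
`K = {x : pᵀx ≤ B, 0 ≤ x ≤ 1}` iff there is `τ ≥ 0` with `τ(B − pᵀx) = 0` and
`λ x_i = max{0, min{λ, d_i − p_i τ}}` for all `i`. -/
theorem statement16 {m : ℕ} (p : Fin m → ℝ) (hp : ∀ i, 0 < p i)
    (B : ℝ) (hB : 0 < B) (lam : ℝ) (hlam : 0 < lam) (d : Fin m → ℝ)
    (x : Fin m → ℝ) (hx : p ⬝ᵥ x ≤ B ∧ ∀ i, 0 ≤ x i ∧ x i ≤ 1) :
    (∀ y : Fin m → ℝ, (p ⬝ᵥ y ≤ B ∧ ∀ i, 0 ≤ y i ∧ y i ≤ 1) →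
        d ⬝ᵥ y - lam / 2 * ∑ i, (y i) ^ 2 ≤ d ⬝ᵥ x - lam / 2 * ∑ i, (x i) ^ 2)
    ↔ ∃ τ : ℝ, 0 ≤ τ ∧ τ * (B - p ⬝ᵥ x) = 0 ∧
        ∀ i, lam * x i = max 0 (min lam (d i - p i * τ)) := by
  constructor
  · intro hopt
    obtain ⟨z, hz, τ, hτ, hc, hk⟩ := kkt_exists p hp B hB lam hlam d
    have h1 := kkt_suff p B lam hlam d z τ hτ hc hk x hx
    have h2 := hopt z hz
    have h3 : ∑ i, (x i - z i) ^ 2 ≤ 0 := by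
      by_contra h
      push Not at h
      have := mul_pos (half_pos hlam) h
      linarith
    have h4 : x = z := by
      funext i
      have h5 := Finset.single_le_sum (f := fun i => (x i - z i) ^ 2)
        (fun i _ => sq_nonneg _) (Finset.mem_univ i)
      have h6 : (x i - z i) ^ 2 = 0 := le_antisymm (h5.trans h3) (sq_nonneg _)
      exact sub_eq_zero.1 (pow_eq_zero_iff two_ne_zero |>.1 h6)
    subst h4
    exact ⟨τ, hτ, hc, hk⟩
  · rintro ⟨τ, hτ, hc, hk⟩ y hy
    have h1 := kkt_suff p B lam hlam d x τ hτ hc hk y hy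
    have h2 : 0 ≤ lam / 2 * ∑ i, (y i - x i) ^ 2 :=
      mul_nonneg (half_pos hlam).le (Finset.sum_nonneg fun i _ => sq_nonneg _)
    linarith
end

section
/- Let m = 1, X = [−1/2, 1/2] ⊂ ℝ, f ≡ 0, and C = {−1, 1}. Then: (i) for every c ∈ C and every d ≠ 0, with x*(d) = −sign(d)/2, the true loss satisfies L(d,c) = c·x*(d) − min_{x∈X} c·x = (c·sign(d) − 1)/2·(−1), i.e., L(d,c) = 0 if sign(d) = c and L(d,c) = 1 if sign(d) ≠ c (the 0-1 classification loss); (ii) for every c ∈ C and every d ∈ ℝ, the SPO+ loss satisfies ℓ_SPO+(d,c) := (2d−c)·(−c/2) − min_{x∈[−1/2,1/2]} (2d−c)·x = (|2d−c| − (2d−c)c)/2 = max{0, 1 − 2dc} (the hinge loss). -/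
theorem sInf_aux (a : ℝ) :
    sInf ((fun x => a * x) '' Set.Icc (-(1:ℝ)/2) (1/2)) = -|a| / 2 := by
  apply IsLeast.csInf_eq
  rcases abs_cases a with ⟨h, h'⟩ | ⟨h, h'⟩
  · refine ⟨⟨-1/2, by norm_num, by simp only [h]; ring⟩, ?_⟩
    rintro _ ⟨x, ⟨h1, h2⟩, rfl⟩
    simp only [h]
    nlinarith
  · refine ⟨⟨1/2, by norm_num, by simp only [h]; ring⟩, ?_⟩
    rintro _ ⟨x, ⟨h1, h2⟩, rfl⟩
    simp only [h]
    nlinarith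

/-- in the binary classification setting `X = [−1/2,1/2]`, `C = {−1,1}`,
`f ≡ 0`: (i) the true loss with `x*(d) = −sign(d)/2` (for `d ≠ 0`) is the 0-1 loss;
(ii) the SPO+ loss equals `(|2d−c| − (2d−c)c)/2 = max{0, 1 − 2dc}` (the hinge loss). -/
theorem statement17 :
    (∀ c ∈ ({-1, 1} : Set ℝ), ∀ d : ℝ, d ≠ 0 →
      c * (-(Real.sign d) / 2) - sInf ((fun x => c * x) '' Set.Icc (-(1:ℝ)/2) (1/2))
        = if Real.sign d = c then 0 else 1) ∧
    (∀ c ∈ ({-1, 1} : Set ℝ), ∀ d : ℝ,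
      ((2 * d - c) * (-c / 2) - sInf ((fun x => (2 * d - c) * x) '' Set.Icc (-(1:ℝ)/2) (1/2))
          = (|2 * d - c| - (2 * d - c) * c) / 2) ∧
      ((2 * d - c) * (-c / 2) - sInf ((fun x => (2 * d - c) * x) '' Set.Icc (-(1:ℝ)/2) (1/2))
          = max 0 (1 - 2 * d * c))) := by
  simp only [sInf_aux]
  refine ⟨?_, ?_⟩
  · rintro c (rfl | rfl) d hd
    all_goals
      rcases lt_or_gt_of_ne hd with h | h
      · rw [Real.sign_of_neg h]; norm_num
      · rw [Real.sign_of_pos h]; norm_num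
  · rintro c (rfl | rfl) d
    · refine ⟨by ring, ?_⟩
      rcases abs_cases (2 * d - -1) with ⟨h, h'⟩ | ⟨h, h'⟩
      · rw [h, max_eq_right (by linarith)]; ring
      · rw [h, max_eq_left (by linarith)]; ring
    · refine ⟨by ring, ?_⟩
      rcases abs_cases (2 * d - 1) with ⟨h, h'⟩ | ⟨h, h'⟩
      · rw [h, max_eq_left (by linarith)]; ring
      · rw [h, max_eq_right (by linarith)]; ring
end

section
/- Fix m ≥ 3 and p ∈ ℝ^m with p_j > 0 for all j and Σ_{j=1}^m p_j = 1, and define F(d) := Σ_{j=1}^m p_j · ( 2d_j − min_{j'∈[m]} (2d_{j'} − 𝟙[j' ≠ j]) ) for d ∈ ℝ^m, where 𝟙[j' ≠ j] is 1 if j' ≠ j and 0 otherwise (F(d) is the expected SPO+ loss for multiclass classification). Then: (i) if max_{j∈[m]} p_j < 1/2, the set of minimizers of F is exactly {α·𝟙_m : α ∈ ℝ}, the set of constant vectors; (ii) if there exists j* with p_{j*} > 1/2, the set of minimizers of F is exactly {(α·𝟙_m − e_{j*})/2 : α ∈ ℝ}, where e_{j*} is the j*-th standard basis vector. In particular, in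 case (i) the SPO+ loss is not Fisher consistent for the multiclass 0-1 loss. -/
/-- The expected SPO+ loss for multiclass classification:
`F(d) = Σ_j p_j (2 d_j − min_{j'} (2 d_{j'} − 𝟙[j' ≠ j]))`. -/
noncomputable def Fspo {m : ℕ} (p : Fin m → ℝ) (d : Fin m → ℝ) : ℝ :=
  ∑ j, p j * (2 * d j - ⨅ j' : Fin m, (2 * d j' - if j' ≠ j then 1 else 0))


theorem Fspo_key {m : ℕ} (hm : 3 ≤ m) (p : Fin m → ℝ)
    (hp : ∀ j, 0 < p j) (hsum : ∑ j, p j = 1) (d : Fin m → ℝ) :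
    ∃ (k : Fin m) (t : ℝ) (r : Fin m → ℝ), 0 ≤ t ∧ (∀ j, 0 ≤ r j) ∧
      (∀ j, j ≠ k → 2 * d j = 2 * d k + t + r j) ∧
      (1 - p k) * (1 + t) + p k * max 0 (1 - t) + ∑ j, p j * r j ≤ Fspo p d := by
  have : Nonempty (Fin m) := ⟨⟨0, by omega⟩⟩
  have : Nontrivial (Fin m) := Fin.nontrivial_iff_two_le.mpr (by omega)
  obtain ⟨k, hk⟩ := Finite.exists_min d
  obtain ⟨l0, hl0⟩ := exists_ne k
  obtain ⟨l, hl, hmin⟩ := (Finset.univ.erase k).exists_min_image d ⟨l0, by simp [hl0]⟩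
  have hlk : l ≠ k := by simpa using hl
  have hmin' : ∀ j, j ≠ k → d l ≤ d j := fun j hj => hmin j (by simp [hj])
  refine ⟨k, 2 * d l - 2 * d k, fun j => if j = k then 0 else 2 * d j - 2 * d l, ?_, ?_, ?_, ?_⟩
  · linarith [hk l]
  · intro j
    by_cases h : j = k
    · simp [h]
    · simp only [h, if_false]; linarith [hmin' j h]
  · intro j h
    simp only [h, if_false]; ring
  · have hb : ∀ j j', (⨅ j' : Fin m, (2 * d j' - if j' ≠ j then 1 else 0))
        ≤ 2 * d j' - if j' ≠ j then 1 else 0 := fun j j' =>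
      ciInf_le (Set.finite_range _).bddBelow j'
    have e : (1 - p k) * (1 + (2 * d l - 2 * d k)) + p k * max 0 (1 - (2 * d l - 2 * d k))
        + ∑ j, p j * (if j = k then 0 else 2 * d j - 2 * d l)
        = ∑ j, p j * (if j = k then max 0 (1 - (2 * d l - 2 * d k))
            else 1 + (2 * d j - 2 * d k)) := by
      have e1 : ∀ j, p j * (if j = k then max 0 (1 - (2 * d l - 2 * d k))
            else 1 + (2 * d j - 2 * d k)) = p j * (1 + (2 * d l - 2 * d k))
            + p j * (if j = k then 0 else 2 * d j - 2 * d l)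
            + (if j = k then p j * (max 0 (1 - (2 * d l - 2 * d k))
              - (1 + (2 * d l - 2 * d k))) else 0) := by
        intro j
        by_cases h : j = k
        · simp only [h, if_true]; ring
        · simp only [h, if_false]; ring
      rw [Finset.sum_congr rfl (fun j _ => e1 j), Finset.sum_add_distrib,
        Finset.sum_add_distrib, ← Finset.sum_mul, hsum, Finset.sum_ite_eq' Finset.univ k]
      simp only [Finset.mem_univ, if_true]
      ring
    rw [e]
    unfold Fspo
    refine Finset.sum_le_sum fun j _ => mul_le_mul_of_nonneg_left ?_ (hp j).le
    by_cases h : j = k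
    · subst h
      have h1 := hb j j
      have h2 := hb j l
      simp only [ne_eq, not_true_eq_false, if_false] at h1
      simp only [ne_eq, hlk, not_false_eq_true, if_true] at h2
      simp only [if_true, ne_eq]
      refine max_le ?_ ?_ <;> linarith
    · have h1 := hb j k
      simp only [ne_eq, Ne.symm h, not_false_eq_true, if_true] at h1
      rw [if_neg h]
      simp only [ne_eq]
      linarith

theorem Fspo_le {m : ℕ} (hm : 3 ≤ m) (p : Fin m → ℝ) (hp : ∀ j, 0 < p j)
    (d c : Fin m → ℝ)
    (h : ∀ j j', 2 * d j - c j ≤ 2 * d j' - if j' ≠ j then 1 else 0) :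
    Fspo p d ≤ ∑ j, p j * c j := by
  have : Nonempty (Fin m) := ⟨⟨0, by omega⟩⟩
  unfold Fspo
  refine Finset.sum_le_sum fun j _ => mul_le_mul_of_nonneg_left ?_ (hp j).le
  have := le_ciInf (h j)
  linarith

theorem Fspo_const {m : ℕ} (hm : 3 ≤ m) (p : Fin m → ℝ) (hp : ∀ j, 0 < p j)
    (hsum : ∑ j, p j = 1) (α : ℝ) : Fspo p (fun _ => α) ≤ 1 := by
  have := Fspo_le hm p hp (fun _ => α) (fun _ => 1) (by
    intro j j'
    split_ifs <;> linarith)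
  simpa [hsum] using this

theorem Fspo_star {m : ℕ} (hm : 3 ≤ m) (p : Fin m → ℝ) (hp : ∀ j, 0 < p j)
    (hsum : ∑ j, p j = 1) (s : Fin m) (α : ℝ) :
    Fspo p (fun j => (α - if j = s then 1 else 0) / 2) ≤ 2 * (1 - p s) := by
  have := Fspo_le hm p hp (fun j => (α - if j = s then 1 else 0) / 2)
    (fun j => 2 - if j = s then 2 else 0) (by
    intro j j'
    by_cases h1 : j = s <;> by_cases h2 : j' = s <;> by_cases h3 : j' = j <;>
      simp_all <;> linarith)
  have e : ∑ j, p j * (2 - if j = s then 2 else 0) = 2 * (1 - p s) := by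
    simp only [mul_sub, Finset.sum_sub_distrib, ← Finset.sum_mul, hsum, mul_ite, mul_zero,
      Finset.sum_ite_eq', Finset.mem_univ, if_true]
    ring
  linarith

theorem r_zero {m : ℕ} (p r : Fin m → ℝ) (hp : ∀ j, 0 < p j) (hr : ∀ j, 0 ≤ r j)
    (h : ∑ j, p j * r j ≤ 0) (j : Fin m) : r j = 0 := by
  have h1 : p j * r j ≤ ∑ j, p j * r j :=
    Finset.single_le_sum (f := fun j => p j * r j)
      (fun i _ => mul_nonneg (hp i).le (hr i)) (Finset.mem_univ j)
  have := hp j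
  have := hr j
  by_contra hne
  have : 0 < r j := lt_of_le_of_ne (hr j) (Ne.symm hne)
  have := mul_pos (hp j) this
  linarith

theorem Fspo_ge_one {m : ℕ} (hm : 3 ≤ m) (p : Fin m → ℝ)
    (hp : ∀ j, 0 < p j) (hsum : ∑ j, p j = 1) (hh : ∀ j, p j < 1 / 2) (d : Fin m → ℝ) :
    1 ≤ Fspo p d ∧ (Fspo p d ≤ 1 → ∃ α : ℝ, d = fun _ => α) := by
  obtain ⟨k, t, r, ht, hr, hd, hF⟩ := Fspo_key hm p hp hsum d
  have hS : 0 ≤ ∑ j, p j * r j := Finset.sum_nonneg fun i _ => mul_nonneg (hp i).le (hr i)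
  have hM : p k * (1 - t) ≤ p k * max 0 (1 - t) :=
    mul_le_mul_of_nonneg_left (le_max_right _ _) (hp k).le
  have hk := hh k
  have h2 : 0 ≤ t * (1 - 2 * p k) := mul_nonneg ht (by linarith)
  refine ⟨by nlinarith, fun hle => ⟨d k, ?_⟩⟩
  have hr0 := r_zero p r hp hr (by nlinarith)
  have ht0 : t = 0 := by
    have : t * (1 - 2 * p k) = 0 := by nlinarith
    rcases mul_eq_zero.mp this with h | h
    · exact h
    · linarith
  funext j
  by_cases h : j = k
  · rw [h]
  · have := hd j h
    rw [hr0 j, ht0] at this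
    linarith

theorem Fspo_ge_star {m : ℕ} (hm : 3 ≤ m) (p : Fin m → ℝ)
    (hp : ∀ j, 0 < p j) (hsum : ∑ j, p j = 1) (s : Fin m) (hs : 1 / 2 < p s) (d : Fin m → ℝ) :
    2 * (1 - p s) ≤ Fspo p d ∧ (Fspo p d ≤ 2 * (1 - p s) →
      ∃ α : ℝ, d = fun j => (α - if j = s then 1 else 0) / 2) := by
  obtain ⟨k, t, r, ht, hr, hd, hF⟩ := Fspo_key hm p hp hsum d
  have hS : 0 ≤ ∑ j, p j * r j := Finset.sum_nonneg fun i _ => mul_nonneg (hp i).le (hr i)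
  have hM : p k * (1 - t) ≤ p k * max 0 (1 - t) :=
    mul_le_mul_of_nonneg_left (le_max_right _ _) (hp k).le
  have hM0 : 0 ≤ p k * max 0 (1 - t) :=
    mul_nonneg (hp k).le (le_max_left _ _)
  have hpair : ∀ i j : Fin m, i ≠ j → p i + p j ≤ 1 := by
    intro i j hij
    rw [← hsum, ← Finset.sum_pair hij]
    exact Finset.sum_le_sum_of_subset_of_nonneg (Finset.subset_univ _) fun i _ _ => (hp i).le
  by_cases hks : k = s
  · subst hks
    obtain ⟨l, hl⟩ : ∃ l, l ≠ k := by
      have : Nontrivial (Fin m) := Fin.nontrivial_iff_two_le.mpr (by omega)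
      exact exists_ne k
    have hlt : p k < 1 := by linarith [hpair l k hl, hp l]
    have hA : Fspo p d ≥ 2 * (1 - p k) + (1 - p k) * (t - 1) + ∑ j, p j * r j := by nlinarith
    have hB : Fspo p d ≥ 2 * (1 - p k) + (2 * p k - 1) * (1 - t) + ∑ j, p j * r j := by nlinarith
    rcases lt_trichotomy t 1 with h | h | h
    · have := mul_pos (show 0 < 2 * p k - 1 by linarith) (show 0 < 1 - t by linarith)
      exact ⟨by linarith, fun _ => by linarith⟩
    · subst h
      refine ⟨by linarith, fun hle => ⟨2 * d k + 1, ?_⟩⟩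
      have hr0 := r_zero p r hp hr (by linarith)
      funext j
      by_cases h : j = k
      · simp [h]
      · have := hd j h
        rw [hr0 j] at this
        simp only [h, if_false]
        linarith
    · have := mul_pos (show 0 < 1 - p k by linarith) (show 0 < t - 1 by linarith)
      exact ⟨by linarith, fun _ => by linarith⟩
  · have := hpair k s hks
    have h2 : 0 ≤ t * (1 - 2 * p k) := mul_nonneg ht (by linarith)
    have : 1 ≤ Fspo p d := by nlinarith
    exact ⟨by linarith, fun _ => by linarith⟩

/-- (i) if all `p_j < 1/2` the minimizers of `F` are exactly the constant
vectors; (ii) if some `p_{j*} > 1/2` the minimizers are exactly `(α𝟙 − e_{j*})/2`, `α ∈ ℝ`;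
in particular in case (i) (with `p` non-constant) SPO+ is not Fisher consistent: some
minimizer's argmin set is not contained in the argmax set of `p`. -/
theorem statement18 {m : ℕ} (hm : 3 ≤ m) (p : Fin m → ℝ)
    (hp : ∀ j, 0 < p j) (hsum : ∑ j, p j = 1) :
    ((∀ j, p j < 1 / 2) →
      {d : Fin m → ℝ | ∀ d', Fspo p d ≤ Fspo p d'}
        = {d : Fin m → ℝ | ∃ α : ℝ, d = fun _ => α}) ∧
    (∀ jstar : Fin m, 1 / 2 < p jstar →
      {d : Fin m → ℝ | ∀ d', Fspo p d ≤ Fspo p d'}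
        = {d : Fin m → ℝ | ∃ α : ℝ, d = fun j => (α - if j = jstar then 1 else 0) / 2}) ∧
    ((∀ j, p j < 1 / 2) → (∃ j j', p j ≠ p j') →
      ∃ d : Fin m → ℝ, (∀ d', Fspo p d ≤ Fspo p d') ∧
        ¬ ({j | ∀ j', d j ≤ d j'} ⊆ {j | ∀ j', p j' ≤ p j})) := by
  refine ⟨fun hh => ?_, fun s hs => ?_, ?_⟩
  · ext d
    simp only [Set.mem_ofPred_eq]
    constructor
    · intro h
      exact (Fspo_ge_one hm p hp hsum hh d).2 ((h _).trans (Fspo_const hm p hp hsum 0))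
    · rintro ⟨α, rfl⟩ d'
      exact (Fspo_const hm p hp hsum α).trans (Fspo_ge_one hm p hp hsum hh d').1
  · ext d
    simp only [Set.mem_ofPred_eq]
    constructor
    · intro h
      exact (Fspo_ge_star hm p hp hsum s hs d).2 ((h _).trans (Fspo_star hm p hp hsum s 0))
    · rintro ⟨α, rfl⟩ d'
      exact (Fspo_star hm p hp hsum s α).trans (Fspo_ge_star hm p hp hsum s hs d').1
  · rintro hh ⟨a, b, hab⟩
    refine ⟨fun _ => 0, fun d' =>
      (Fspo_const hm p hp hsum 0).trans (Fspo_ge_one hm p hp hsum hh d').1, fun hsub => hab ?_⟩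
    have h1 := hsub (show a ∈ _ from fun _ => le_refl _) b
    have h2 := hsub (show b ∈ _ from fun _ => le_refl _) a
    exact le_antisymm h2 h1
end
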